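/- Let R be a reduced commutative ring whose only idempotents are 0 and 1 (so Spec R is connected), let n ≥ 1, and let (L_i)_{i∈ℤ} be a complete periodic lattice chain in R((u))^{2n}. If there exists a ∈ R((u))^× such that L_i^∨ = a·L_{-i} for all i ∈ ℤ, then there exists r ∈ ℤ such that L_i^∨ = u^r·L_{-i} for all i ∈ ℤ. -/

import Mathlib

noncomputable section
namespace Pap

variable (R : Type*) [CommRing R]

/-- `u^m` as a Laurent series. -/
def U (m : ℤ) : LaurentSeries R := HahnSeries.single m 1

/-- `R[[u]]` as a `R[[u]]`-submodule of `R((u))`. -/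
def psRange : Submodule (PowerSeries R) (LaurentSeries R) :=
  LinearMap.range (Algebra.linearMap (PowerSeries R) (LaurentSeries R))

variable (n : ℕ)

/-- `R((u))^n`. -/
abbrev V := Fin n → LaurentSeries R

instance (priority := 10000) : AddCommGroup (V R n) := Pi.addCommGroup
instance (priority := 10000) : Module (PowerSeries R) (V R n) := Pi.module _ _ _
instance (priority := 10000) : Module (LaurentSeries R) (V R n) := Pi.module _ _ _

/-- Multiplication by a Laurent series, as an `R[[u]]`-linear endomorphism of `R((u))^n`. -/
def smulV (a : LaurentSeries R) : V R n →ₗ[PowerSeries R] V R n where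
  toFun x := a • x
  map_add' x y := smul_add a x y
  map_smul' c x := by
    funext i
    change a • c • x i = c • a • x i
    simp only [Pi.smul_apply, RingHom.id_apply, smul_eq_mul, Algebra.smul_def]
    ring

/-- Image of a submodule under multiplication by a Laurent series. -/
def scaleL (a : LaurentSeries R) (L : Submodule (PowerSeries R) (V R n)) :
    Submodule (PowerSeries R) (V R n) := L.map (smulV R n a)

/-- The standard lattice `R[[u]]^n`. -/
def stdLat : Submodule (PowerSeries R) (V R n) := Submodule.pi Set.univ fun _ => psRange R

/-- The quotient `B/(A ∩ B)`; for `A ≤ B` this is `B/A`. -/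
abbrev subQuot (A B : Submodule (PowerSeries R) (V R n)) :=
  B ⧸ (A.comap B.subtype)

/-- A lattice in `R((u))^n`. -/
def IsLattice (L : Submodule (PowerSeries R) (V R n)) : Prop :=
  ∃ N : ℕ, scaleL R n (U R N) (stdLat R n) ≤ L ∧ L ≤ scaleL R n (U R (-(N : ℤ))) (stdLat R n) ∧
    Module.Finite R (RestrictScalars R (PowerSeries R)
      (subQuot R n L (scaleL R n (U R (-(N : ℤ))) (stdLat R n)))) ∧
    Module.Projective R (RestrictScalars R (PowerSeries R)
      (subQuot R n L (scaleL R n (U R (-(N : ℤ))) (stdLat R n))))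

/-- Rank one finite locally free module. -/
def RankOne (A : Type*) [CommRing A] (Q : Type*) [AddCommGroup Q] [Module A Q] : Prop :=
  Module.Finite A Q ∧ Module.Projective A Q ∧
    ∀ (P : Ideal A) [P.IsPrime],
      Module.finrank (Localization P.primeCompl) (LocalizedModule P.primeCompl Q) = 1

/-- Exponent of `u` bounding the `t`-th coordinate of the `j`-th standard lattice. -/
def dex (j : ℤ) (t : Fin n) : ℤ := (j - ((t : ℤ) + 1)) / n + 1

/-- The standard lattice chain `Λ̃_j`, `j ∈ ℤ`. -/
def stdChain (j : ℤ) : Submodule (PowerSeries R) (V R n) :=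
  Submodule.span (PowerSeries R)
    (Set.range fun t : Fin n =>
      (fun s => if s = t then U R (-(dex n j t)) else 0 : V R n))

/-- A complete periodic lattice chain in `R((u))^n`. -/
def IsLatticeChain (L : ℤ → Submodule (PowerSeries R) (V R n)) : Prop :=
  (∀ i, IsLattice R n (L i)) ∧ (∀ i, L i ≤ L (i + 1)) ∧
    (∀ i, @RankOne R _ (RestrictScalars R (PowerSeries R) (subQuot R n (L i) (L (i + 1)))) _
      (RestrictScalars.module R (PowerSeries R) (subQuot R n (L i) (L (i + 1))))) ∧
    (∀ i, L ((n : ℤ) + i) = scaleL R n (U R (-1)) (L i))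

/-- The action of an invertible matrix over `R((u))` on `R[[u]]`-submodules of `R((u))^n`. -/
def glLat (g : GL (Fin n) (LaurentSeries R)) (L : Submodule (PowerSeries R) (V R n)) :
    Submodule (PowerSeries R) (V R n) :=
  L.map ((Matrix.mulVecLin (g : Matrix (Fin n) (Fin n) (LaurentSeries R))).restrictScalars
    (PowerSeries R))

/-- The symplectic matrix `J̃_{2n}`. -/
def Jt : Matrix (Fin (2 * n)) (Fin (2 * n)) (LaurentSeries R) :=
  Matrix.of fun i j =>
    if (i : ℕ) + (j : ℕ) = 2 * n - 1 then (if (i : ℕ) < n then 1 else -1) else 0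

/-- The bilinear form attached to a matrix `J`. -/
def formJ {m : ℕ} (J : Matrix (Fin m) (Fin m) (LaurentSeries R)) (x y : V R m) :
    LaurentSeries R :=
  dotProduct x (J.mulVec y)

/-- The dual of a lattice with respect to the form attached to `J`. -/
def dualLat {m : ℕ} (J : Matrix (Fin m) (Fin m) (LaurentSeries R))
    (L : Submodule (PowerSeries R) (V R m)) : Submodule (PowerSeries R) (V R m) where
  carrier := {x | ∀ y ∈ L, formJ R J x y ∈ psRange R}
  add_mem' {a b} ha hb y hy := by
    have : formJ R J (a + b) y = formJ R J a y + formJ R J b y := by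
      simp [formJ, add_dotProduct]
    rw [this]; exact Submodule.add_mem _ (ha y hy) (hb y hy)
  zero_mem' y hy := by
    have : formJ R J 0 y = 0 := by simp [formJ]
    rw [this]; exact Submodule.zero_mem _
  smul_mem' c a ha y hy := by
    have : formJ R J (c • a) y = c • formJ R J a y := by
      simp only [formJ, dotProduct, Pi.smul_apply, smul_mul_assoc]
      exact (Finset.smul_sum (r := c) (s := Finset.univ)
        (f := fun i => a i * J.mulVec y i)).symm
    rw [this]; exact Submodule.smul_mem _ c (ha y hy)

end Pap
end

namespace Pap

/-- Minimal index of a coefficient outside a prime. -/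
theorem exists_min_coeff {R : Type*} [CommRing R] (p : Ideal R) (a : LaurentSeries R)
    (h : ∃ i, a.coeff i ∉ p) :
    ∃ m, a.coeff m ∉ p ∧ ∀ i < m, a.coeff i ∈ p := by
  have hwf : ({i | a.coeff i ∉ p} : Set ℤ).IsWF := by
    refine a.isWF_support.mono ?_
    intro i hi h0
    exact hi (by rw [h0]; exact p.zero_mem)
  have hne : ({i | a.coeff i ∉ p} : Set ℤ).Nonempty := h
  refine ⟨hwf.min hne, hwf.min_mem hne, ?_⟩
  intro i hi
  by_contra hc
  exact hwf.not_lt_min hne hc hi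

theorem unit_prime {R : Type*} [CommRing R] (p : Ideal R) [hp : p.IsPrime]
    (a b : LaurentSeries R) (hab : a * b = 1) :
    ∃ m : ℤ, a.coeff m * b.coeff (-m) - 1 ∈ p ∧ (∀ i < m, a.coeff i ∈ p) ∧
      ∀ i < -m, b.coeff i ∈ p := by
  have h1 : ((1 : LaurentSeries R).coeff 0) ∉ p := by
    rw [HahnSeries.coeff_one, if_pos rfl]
    exact fun h => hp.ne_top ((Ideal.eq_top_iff_one p).2 h)
  have ha : ∃ i, a.coeff i ∉ p := by
    by_contra! hc
    apply h1
    rw [← hab, HahnSeries.coeff_mul]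
    exact p.sum_mem fun ij _ => p.mul_mem_right _ (hc _)
  have hb : ∃ i, b.coeff i ∉ p := by
    by_contra! hc
    apply h1
    rw [← hab, HahnSeries.coeff_mul]
    exact p.sum_mem fun ij _ => p.mul_mem_left _ (hc _)
  obtain ⟨m, hm, hm'⟩ := exists_min_coeff p a ha
  obtain ⟨k, hk, hk'⟩ := exists_min_coeff p b hb
  have key : (a * b).coeff (m + k) - a.coeff m * b.coeff k ∈ p := by
    rw [HahnSeries.coeff_mul]
    have hmem : (m, k) ∈ Finset.antidiagonal a.isPWO_support b.isPWO_support (m + k) := by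
      rw [Finset.mem_antidiagonal]
      refine ⟨?_, ?_, rfl⟩
      · intro h0; exact hm (by rw [h0]; exact p.zero_mem)
      · intro h0; exact hk (by rw [h0]; exact p.zero_mem)
    rw [← Finset.add_sum_erase _ _ hmem, add_sub_cancel_left]
    refine p.sum_mem fun ij hij => ?_
    rw [Finset.mem_erase, Finset.mem_antidiagonal] at hij
    obtain ⟨hne, -, -, hs⟩ := hij
    rcases lt_trichotomy ij.1 m with h | h | h
    · exact p.mul_mem_right _ (hm' _ h)
    · exact absurd (Prod.ext h (by simp only; omega)) hne
    · exact p.mul_mem_left _ (hk' _ (by omega))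
  rw [hab, HahnSeries.coeff_one] at key
  have hmk : m + k = 0 := by
    by_contra hc
    rw [if_neg hc, zero_sub, neg_mem_iff] at key
    rcases hp.mem_or_mem key with h | h
    · exact hm h
    · exact hk h
  obtain rfl : k = -m := by omega
  rw [if_pos hmk] at key
  refine ⟨m, ?_, hm', hk'⟩
  rw [← neg_mem_iff, neg_sub]; exact key

theorem eq_zero_of_primes {R : Type*} [CommRing R] [IsReduced R] (x : R)
    (h : ∀ p : Ideal R, p.IsPrime → x ∈ p) : x = 0 := by
  have : x ∈ nilradical R := by
    rw [nilradical_eq_sInf, Ideal.mem_sInf]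
    intro p hp
    exact h p hp
  exact (mem_nilradical.1 this).eq_zero

theorem unit_shape {R : Type*} [CommRing R] [IsReduced R] [Nontrivial R]
    (hid : ∀ e : R, IsIdempotentElem e → e = 0 ∨ e = 1)
    (a b : LaurentSeries R) (hab : a * b = 1) :
    ∃ m : ℤ, (∀ i < m, a.coeff i = 0) ∧ ∀ i < -m, b.coeff i = 0 := by
  have hidem : ∀ i : ℤ, IsIdempotentElem (a.coeff i * b.coeff (-i)) := by
    intro i
    have : (a.coeff i * b.coeff (-i)) * (a.coeff i * b.coeff (-i) - 1) = 0 := by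
      apply eq_zero_of_primes
      intro p hp
      obtain ⟨m, h1, h2, h3⟩ := unit_prime p a b hab
      rcases lt_trichotomy i m with h | h | h
      · exact p.mul_mem_right _ (p.mul_mem_right _ (h2 _ h))
      · subst h; exact p.mul_mem_left _ h1
      · exact p.mul_mem_right _ (p.mul_mem_left _ (h3 _ (by omega)))
    unfold IsIdempotentElem
    linear_combination this
  obtain ⟨p, hp⟩ := Ideal.exists_maximal R
  obtain ⟨m, h1, -, -⟩ := unit_prime p a b hab
  have hem : a.coeff m * b.coeff (-m) = 1 := by
    rcases hid _ (hidem m) with h | h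
    · rw [h, zero_sub, neg_mem_iff] at h1
      exact absurd ((Ideal.eq_top_iff_one p).2 h1) hp.ne_top
    · exact h
  have hall : ∀ q : Ideal R, q.IsPrime →
      (∀ i < m, a.coeff i ∈ q) ∧ ∀ i < -m, b.coeff i ∈ q := by
    intro q hq
    obtain ⟨k, -, h2, h3⟩ := unit_prime q a b hab
    have hn1 : a.coeff m * b.coeff (-m) ∉ q := by
      rw [hem]; exact fun h => hq.ne_top ((Ideal.eq_top_iff_one q).2 h)
    rcases lt_trichotomy m k with h | h | h
    · exact absurd (q.mul_mem_right _ (h2 _ h)) hn1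
    · subst h; exact ⟨h2, h3⟩
    · exact absurd (q.mul_mem_left _ (h3 _ (by omega))) hn1
  exact ⟨m, fun i hi => eq_zero_of_primes _ fun q hq => (hall q hq).1 i hi,
    fun i hi => eq_zero_of_primes _ fun q hq => (hall q hq).2 i hi⟩

theorem factor {R : Type*} [CommRing R] (a : LaurentSeries R) (m : ℤ)
    (h : ∀ i < m, a.coeff i = 0) :
    ∃ f : PowerSeries R, a = U R m * algebraMap (PowerSeries R) (LaurentSeries R) f := by
  refine ⟨PowerSeries.mk fun k => a.coeff (m + k), ?_⟩
  ext i
  have e : i = (i - m) + m := by omega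
  rw [U, e, HahnSeries.coeff_single_mul_add, one_mul, ← e]
  change _ = ((PowerSeries.mk fun k => a.coeff (m + k) : PowerSeries R) : LaurentSeries R).coeff _
  rw [PowerSeries.coeff_coe]
  split_ifs with hi
  · exact h _ (by omega)
  · rw [PowerSeries.coeff_mk]; congr 1; omega

theorem scale_le {R : Type*} [CommRing R] (n : ℕ) (c : LaurentSeries R) (f : PowerSeries R)
    (L : Submodule (PowerSeries R) (V R n)) :
    scaleL R n (c * algebraMap (PowerSeries R) (LaurentSeries R) f) L ≤ scaleL R n c L := by
  rintro _ ⟨x, hx, rfl⟩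
  refine ⟨f • x, L.smul_mem f hx, ?_⟩
  funext i
  change c * (f • x i) = (c * algebraMap (PowerSeries R) (LaurentSeries R) f) * x i
  rw [Algebra.smul_def, mul_assoc]

end Pap

open Pap in
/-- Over a reduced connected base, a self-dual complete periodic lattice chain (with respect to
the standard symplectic form) is `r`-self-dual for some `r ∈ ℤ`. -/
theorem stmt8 (R : Type*) [CommRing R] [IsReduced R]
    (hid : ∀ e : R, IsIdempotentElem e → e = 0 ∨ e = 1)
    (n : ℕ) (hn : 1 ≤ n) (L : ℤ → Submodule (PowerSeries R) (V R (2 * n)))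
    (hL : IsLatticeChain R (2 * n) L)
    (hdual : ∃ a : (LaurentSeries R)ˣ, ∀ i : ℤ,
      dualLat R (Jt R n) (L i) = scaleL R (2 * n) (a : LaurentSeries R) (L (-i))) :
    ∃ r : ℤ, ∀ i : ℤ,
      dualLat R (Jt R n) (L i) = scaleL R (2 * n) (U R r) (L (-i)) := by
  obtain ⟨a, ha⟩ := hdual
  rcases subsingleton_or_nontrivial R with hR | hR
  · refine ⟨0, fun i => ?_⟩
    rw [ha i]
    congr 1
    ext j
    exact Subsingleton.elim _ _
  · obtain ⟨m, h1, h2⟩ := unit_shape hid (a : LaurentSeries R) (↑a⁻¹) a.mul_inv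
    obtain ⟨f, hf⟩ := factor _ _ h1
    obtain ⟨g, hg⟩ := factor _ _ h2
    refine ⟨m, fun i => ?_⟩
    rw [ha i]
    apply le_antisymm
    · rw [hf]; exact scale_le _ _ _ _
    · have hU : U R m * U R (-m) = 1 := by
        simp [U, HahnSeries.single_mul_single]
      have : U R m = (a : LaurentSeries R) * algebraMap (PowerSeries R) (LaurentSeries R) g := by
        have h3 : (a : LaurentSeries R) * (↑a⁻¹ : LaurentSeries R) = 1 := a.mul_inv
        rw [hg] at h3
        linear_combination
          ((a : LaurentSeries R) * algebraMap (PowerSeries R) (LaurentSeries R) g) * hU -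
            (U R m) * h3
      rw [this]; exact scale_le _ _ _ _
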